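/- arXiv:math/0701627 — 12 statements merged into one kernel-verified Lean document; each statement's English description precedes it below -/
import Mathlib

section
/- Let N be the set of nilpotent elements of S and N* = N \ {0}. If N* is nonempty, then the subgraph of Γ(S) induced on N* is connected and has diameter at most 2. -/
/-- A commutative semigroup with a zero element. -/
class CommSemigroupWithZero (S : Type*) extends SemigroupWithZero S where
  mul_comm : ∀ a b : S, a * b = b * a

variable (S : Type*) [CommSemigroupWithZero S]

/-- The set of zero-divisors of `S`. -/
def zdivs : Set S := {x | ∃ y, y ≠ 0 ∧ x * y = 0}

/-- The vertex set `Z(S)* = Z(S) \ {0}` of the zero-divisor graph. -/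
def zdVerts : Set S := {x | x ≠ 0 ∧ x ∈ zdivs S}

/-- The zero-divisor graph `Γ(S)`. -/
def zdGraph : SimpleGraph (zdVerts S) where
  Adj x y := x ≠ y ∧ (x : S) * y = 0
  symm := by
    constructor
    rintro x y ⟨hne, h⟩
    exact ⟨hne.symm, by rw [CommSemigroupWithZero.mul_comm]; exact h⟩
  loopless := ⟨fun x h => h.1 rfl⟩

/-- `I` is an ideal of the semigroup `S`. -/
def IsIdeal (I : Set S) : Prop := I.Nonempty ∧ ∀ x ∈ I, ∀ s : S, x * s ∈ I

/-- `p` is a prime ideal of the semigroup `S`. -/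
def IsPrimeIdeal (p : Set S) : Prop :=
  IsIdeal S p ∧ ∀ x y : S, (∀ s : S, x * s * y ∈ p) → x ∈ p ∨ y ∈ p

/-- `x` is nilpotent: `x ^ (n + 1) = 0` for some `n`. -/
def IsNil (x : S) : Prop := ∃ n : ℕ, (fun y => x * y)^[n] x = 0

/-- The annihilator of `a`. -/
def Ann (a : S) : Set S := {s | s * a = 0}

/-- The set of associated primes of `S`. -/
def Ass : Set (Set S) := {p | IsPrimeIdeal S p ∧ ∃ x : S, p = Ann S x}


theorem exists_last {S : Type*} [CommSemigroupWithZero S] (P : S → Prop) (x : S)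
    (hP : ∀ a, P a → P (x * a)) (n : ℕ) :
    ∀ a : S, a ≠ 0 → P a → (fun y => x * y)^[n] a = 0 → ∃ b, b ≠ 0 ∧ P b ∧ x * b = 0 := by
  induction n with
  | zero => intro a ha _ h; exact absurd h ha
  | succ n ih =>
    intro a ha hPa h
    by_cases hx : x * a = 0
    · exact ⟨a, ha, hPa, hx⟩
    · exact ih (x * a) hx (hP a hPa) h

theorem iterate_mul_aux {S : Type*} [CommSemigroupWithZero S] (x a : S) (n : ℕ) :
    ∀ c : S, (fun y => x * y)^[n] (c * a) = (fun y => x * y)^[n] c * a := by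
  induction n with
  | zero => intro c; rfl
  | succ n ih =>
    intro c
    simp only [Function.iterate_succ, Function.comp]
    rw [← mul_assoc, ih]

theorem exists_last_nil {S : Type*} [CommSemigroupWithZero S] (P : S → Prop) (x : S)
    (hx : IsNil S x) (hP : ∀ a, P a → P (x * a)) (a : S) (ha : a ≠ 0) (hPa : P a) :
    ∃ b, b ≠ 0 ∧ P b ∧ x * b = 0 := by
  obtain ⟨n, hn⟩ := hx
  refine exists_last P x hP (n + 1) a ha hPa ?_
  simp only [Function.iterate_succ, Function.comp]
  rw [iterate_mul_aux, hn, zero_mul]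

theorem exists_common {S : Type*} [CommSemigroupWithZero S] (x y : S)
    (hx0 : x ≠ 0) (hx : IsNil S x) (hy : IsNil S y) :
    ∃ b : S, b ≠ 0 ∧ IsNil S b ∧ b * b = 0 ∧ x * b = 0 ∧ y * b = 0 := by
  have mc := @CommSemigroupWithZero.mul_comm S _
  obtain ⟨w, hw0, hw, hxw⟩ := exists_last_nil (fun b => b = x ∨ ∃ c, b = x * c) x hx
    (fun a _ => Or.inr ⟨a, rfl⟩) x hx0 (Or.inl rfl)
  obtain ⟨b, hb0, ⟨hb, hxb⟩, hyb⟩ := exists_last_nil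
    (fun b => (b = x ∨ ∃ c, b = x * c) ∧ x * b = 0) y hy
    (by
      rintro a ⟨ha, hxa⟩
      refine ⟨Or.inr ?_, ?_⟩
      · rcases ha with rfl | ⟨c, rfl⟩
        · exact ⟨y, mc _ _⟩
        · exact ⟨c * y, by rw [mc, mul_assoc]⟩
      · rw [mc y a, ← mul_assoc, hxa, zero_mul]) w hw0 ⟨hw, hxw⟩
  have hbb : b * b = 0 := by
    rcases hb with h | ⟨c, h⟩
    · nth_rewrite 1 [h]; exact hxb
    · nth_rewrite 1 [h]; rw [mc x c, mul_assoc, hxb, mul_zero]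
  exact ⟨b, hb0, ⟨1, hbb⟩, hbb, hxb, hyb⟩

/-- If the set `N* = N \ {0}` of nonzero nilpotent elements of `S` is
nonempty, then the subgraph of `Γ(S)` induced on `N*` is connected and has diameter
at most `2`. -/
theorem nilpotent_induced_connected_diam_le_two
    (hne : ∃ x : S, x ≠ 0 ∧ IsNil S x) :
    ((zdGraph S).induce {v : zdVerts S | IsNil S v.val}).Connected ∧
      ∀ u v : {v : zdVerts S | IsNil S v.val},
        ((zdGraph S).induce {v : zdVerts S | IsNil S v.val}).dist u v ≤ 2 := by
  have key : ∀ u v : {v : zdVerts S | IsNil S v.val},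
      ∃ p : ((zdGraph S).induce {v : zdVerts S | IsNil S v.val}).Walk u v, p.length ≤ 2 := by
    have adj : ∀ u v : {v : zdVerts S | IsNil S v.val}, u ≠ v → (u.val.val * v.val.val = 0) →
        ((zdGraph S).induce {v : zdVerts S | IsNil S v.val}).Adj u v := by
      intro u v huv h
      exact ⟨fun e => huv (Subtype.ext e), h⟩
    intro u v
    obtain ⟨b, hb0, hb, hbb, hub, hvb⟩ :=
      exists_common u.val.val v.val.val u.val.2.1 u.2 v.2
    let z : {v : zdVerts S | IsNil S v.val} := ⟨⟨b, hb0, b, hb0, hbb⟩, hb⟩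
    have hzv : z.val.val * v.val.val = 0 := by
      rw [CommSemigroupWithZero.mul_comm]; exact hvb
    by_cases huv : u = v
    · subst huv
      exact ⟨.nil, by simp⟩
    by_cases huz : u = z
    · exact ⟨.cons (adj u v huv (by rw [huz]; exact hzv)) .nil, by simp⟩
    by_cases hvz : z = v
    · exact ⟨.cons (adj u v huv (by rw [← hvz]; exact hub)) .nil, by simp⟩
    exact ⟨.cons (adj u z huz hub) (.cons (adj z v hvz hzv) .nil), by simp⟩
  refine ⟨?_, fun u v => ?_⟩
  · obtain ⟨x, hx0, hx⟩ := hne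
    obtain ⟨b, hb0, hb, hbb, -, -⟩ := exists_common x x hx0 hx hx
    haveI : Nonempty {v : zdVerts S | IsNil S v.val} := ⟨⟨⟨b, hb0, b, hb0, hbb⟩, hb⟩⟩
    exact ⟨fun u v => (key u v).elim fun p _ => ⟨p⟩⟩
  · obtain ⟨p, hp⟩ := key u v
    exact (SimpleGraph.dist_le p).trans hp
end

section
/- Assume Z(S)* is finite and nonempty. Let M be the set of vertices v of Γ(S) for which the distance sum d(v) = Σ_{z ∈ Z(S)*} d(v,z) is minimum (the vertex set of the median of Γ(S)). Then M ∪ {0} is an ideal of S. -/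
variable (S : Type*) [CommSemigroupWithZero S]

theorem zd_reach (x y : zdVerts S) (h : ∀ a : S, (x : S) * a = 0 → (y : S) * a = 0) :
    (zdGraph S).Reachable x y := by
  obtain ⟨a, ha0, hxa⟩ := x.2.2
  have hya := h a hxa
  have hav : a ∈ zdVerts S :=
    ⟨ha0, x, x.2.1, by rw [CommSemigroupWithZero.mul_comm]; exact hxa⟩
  have key : ∀ w : zdVerts S, (w : S) * a = 0 → (zdGraph S).Reachable w ⟨a, hav⟩ := by
    intro w hw
    by_cases e : w = ⟨a, hav⟩
    · rw [e]
    · exact SimpleGraph.Adj.reachable (G := zdGraph S) ⟨e, hw⟩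
  exact (key x hxa).trans (key y hya).symm

theorem zd_dist_le (x y z : zdVerts S) (h : ∀ a : S, (x : S) * a = 0 → (y : S) * a = 0)
    (hz : z ≠ x) : (zdGraph S).dist y z ≤ (zdGraph S).dist x z := by
  have hxy := zd_reach S x y h
  by_cases hr : (zdGraph S).Reachable x z
  · obtain ⟨p, hp⟩ := hr.exists_walk_length_eq_dist
    rw [← hp]
    cases p with
    | nil => exact absurd rfl hz
    | @cons _ a _ hadj q =>
      by_cases e : y = a
      · subst e
        have := SimpleGraph.dist_le q
        simp only [SimpleGraph.Walk.length_cons]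
        omega
      · have hya : (zdGraph S).Adj y a := ⟨e, h a hadj.2⟩
        have := SimpleGraph.dist_le (SimpleGraph.Walk.cons hya q)
        simpa using this
  · have : ¬ (zdGraph S).Reachable y z := fun h' => hr (hxy.trans h')
    rw [SimpleGraph.dist_eq_zero_of_not_reachable this]
    exact Nat.zero_le _

theorem zd_sum_le [Fintype (zdVerts S)] (x y : zdVerts S)
    (h : ∀ a : S, (x : S) * a = 0 → (y : S) * a = 0) :
    (∑ z : zdVerts S, (zdGraph S).dist y z) ≤ ∑ z : zdVerts S, (zdGraph S).dist x z := by
  classical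
  rw [← Equiv.sum_comp (Equiv.swap x y) (fun z => (zdGraph S).dist x z)]
  refine Finset.sum_le_sum fun z _ => ?_
  by_cases h1 : z = x
  · subst h1
    rw [Equiv.swap_apply_left, SimpleGraph.dist_comm]
  by_cases h2 : z = y
  · subst h2
    simp
  · rw [Equiv.swap_apply_of_ne_of_ne h1 h2]
    exact zd_dist_le S x y z h h1

/-- If `Z(S)*` is finite and nonempty, then the vertex set of the
median of `Γ(S)` (the vertices with minimum distance sum), together with `0`,
is an ideal of `S`. -/
theorem median_union_zero_isIdeal [Fintype (zdVerts S)] (hne : (zdVerts S).Nonempty) :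
    IsIdeal S
      ({x : S | ∃ hx : x ∈ zdVerts S, ∀ u : zdVerts S,
          (∑ z : zdVerts S, (zdGraph S).dist ⟨x, hx⟩ z) ≤
            ∑ z : zdVerts S, (zdGraph S).dist u z} ∪ {0}) := by
  refine ⟨⟨0, Or.inr rfl⟩, ?_⟩
  rintro x (⟨hx, hm⟩ | hx) s
  · by_cases h0 : x * s = 0
    · exact Or.inr h0
    · have hann : ∀ a : S, x * a = 0 → x * s * a = 0 := by
        intro a ha
        rw [CommSemigroupWithZero.mul_comm x s, mul_assoc, ha, mul_zero]
      obtain ⟨a, ha0, hxa⟩ := hx.2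
      have hy : x * s ∈ zdVerts S := ⟨h0, a, ha0, hann a hxa⟩
      exact Or.inl ⟨hy, fun u => (zd_sum_le S ⟨x, hx⟩ ⟨x * s, hy⟩ hann).trans (hm u)⟩
  · rw [Set.mem_singleton_iff] at hx
    subst hx
    exact Or.inr (zero_mul s)
end

section
/- If T is a minimal cut vertex set of Γ(S), i.e. deleting the vertices of T from Γ(S) yields a disconnected graph but deleting any proper subset of T does not, then T ∪ {0} is an ideal of S. -/
variable (S : Type*) [CommSemigroupWithZero S]

/-- If `T` is a minimal cut vertex set of `Γ(S)` (deleting the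
vertices of `T` disconnects `Γ(S)`, but deleting any proper subset of `T` does not),
then `T ∪ {0}` is an ideal of `S`. -/
theorem minimal_cut_vertex_set_union_zero_isIdeal (T : Set (zdVerts S))
    (hdisc : ¬ ((zdGraph S).induce Tᶜ).Connected)
    (hmin : ∀ T' : Set (zdVerts S), T' ⊂ T → ((zdGraph S).induce T'ᶜ).Connected) :
    IsIdeal S ((Subtype.val '' T) ∪ {0}) := by
  refine ⟨⟨0, Or.inr rfl⟩, ?_⟩
  rintro _ (⟨x, hxT, rfl⟩ | h0) s
  swap
  · rw [Set.mem_singleton_iff.1 h0, zero_mul]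
    exact Or.inr rfl
  by_cases hz : (x : S) * s = 0
  · exact Or.inr hz
  left
  -- a vertex killed by `x` is killed by `x * s`
  have key : ∀ y : S, (x : S) * y = 0 → (x : S) * s * y = 0 := by
    intro y hy
    rw [mul_assoc, CommSemigroupWithZero.mul_comm s y, ← mul_assoc, hy, zero_mul]
  obtain ⟨y, hy0, hxy⟩ := x.2.2
  let v : zdVerts S := ⟨(x : S) * s, hz, y, hy0, key y hxy⟩
  by_cases hv : v ∈ T
  · exact ⟨v, hv, rfl⟩
  exfalso
  apply hdisc
  have hss : T \ {x} ⊂ T := Set.sdiff_singleton_ssubset.2 hxT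
  have hc := hmin _ hss
  have hxc : x ∈ (T \ {x})ᶜ := fun h => h.2 rfl
  have hwalk : ∀ (a b : ((T \ {x})ᶜ : Set (zdVerts S))),
      ((zdGraph S).induce (T \ {x})ᶜ).Walk a b → b.1 = x → ∀ ha : a.1 ∈ Tᶜ,
      ((zdGraph S).induce Tᶜ).Reachable ⟨a.1, ha⟩ ⟨v, hv⟩ := by
    intro a b w
    induction w with
    | nil =>
      intro hb ha
      rw [Set.mem_compl_iff, hb] at ha
      exact (ha hxT).elim
    | @cons a c b hadj w ih =>
      intro hb ha
      have hadj' : (zdGraph S).Adj a.1 c.1 := hadj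
      by_cases hcx : c.1 = x
      · by_cases hav : a.1 = v
        · have : (⟨a.1, ha⟩ : (Tᶜ : Set (zdVerts S))) = ⟨v, hv⟩ := Subtype.ext hav
          rw [this]
        · apply SimpleGraph.Adj.reachable
          change (zdGraph S).Adj a.1 v
          refine ⟨hav, ?_⟩
          rw [CommSemigroupWithZero.mul_comm]
          apply key
          rw [CommSemigroupWithZero.mul_comm]
          have h2 := hadj'.2
          rw [hcx] at h2
          exact h2
      · have hcT : c.1 ∈ Tᶜ := fun h => c.2 ⟨h, hcx⟩
        refine SimpleGraph.Reachable.trans (SimpleGraph.Adj.reachable ?_) (ih hb hcT)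
        exact hadj'
  have hr : ∀ u : (Tᶜ : Set (zdVerts S)),
      ((zdGraph S).induce Tᶜ).Reachable u ⟨v, hv⟩ := by
    intro u
    obtain ⟨w⟩ := hc.preconnected ⟨u.1, fun h => u.2 h.1⟩ ⟨x, hxc⟩
    exact hwalk _ _ w rfl u.2
  haveI : Nonempty (Tᶜ : Set (zdVerts S)) := ⟨⟨v, hv⟩⟩
  exact ⟨fun a b => (hr a).trans (hr b).symm⟩
end

section
/- If x is a cut vertex of Γ(S) (deleting x from Γ(S) yields a disconnected graph), then {0, x} is an ideal of S; moreover, either x is adjacent in Γ(S) to every other vertex of Γ(S), or x ∈ Sx (i.e. x = s·x for some s ∈ S). -/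
variable (S : Type*) [CommSemigroupWithZero S]

theorem cv_reach (x : zdVerts S) (a b : ({x}ᶜ : Set (zdVerts S)))
    (h : ((a : zdVerts S) : S) * ((b : zdVerts S) : S) = 0) :
    ((zdGraph S).induce ({x}ᶜ : Set (zdVerts S))).Reachable a b := by
  by_cases hab : a = b
  · subst hab; exact SimpleGraph.Reachable.refl _
  · apply SimpleGraph.Adj.reachable
    exact ⟨fun h => hab (Subtype.ext h), h⟩

/-- Every vertex other than `x` reaches a nonzero multiple `z ≠ x` of `x`. -/
theorem cv_reach_mul (x : zdVerts S) (s : S) (z : ({x}ᶜ : Set (zdVerts S)))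
    (hz : ((z : zdVerts S) : S) = (x : S) * s) (a : ({x}ᶜ : Set (zdVerts S))) :
    ((zdGraph S).induce ({x}ᶜ : Set (zdVerts S))).Reachable a z := by
  have comm := CommSemigroupWithZero.mul_comm (S := S)
  have key : ∀ u : S, u * (x : S) = 0 → u * ((z : zdVerts S) : S) = 0 := by
    intro u hu
    rw [hz, ← mul_assoc, hu, zero_mul]
  have mk : ∀ u v : S, u ≠ 0 → v ≠ 0 → u * v = 0 → u ≠ (x : S) →
      ∃ w : ({x}ᶜ : Set (zdVerts S)), ((w : zdVerts S) : S) = u := by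
    intro u v hu hv huv hux
    exact ⟨⟨⟨u, hu, v, hv, huv⟩, fun h => hux (congrArg Subtype.val h)⟩, rfl⟩
  by_cases hax : ((a : zdVerts S) : S) * (x : S) = 0
  · exact cv_reach S x a z (key _ hax)
  obtain ⟨w, hw0, haw⟩ := a.1.2.2
  obtain ⟨y, hy0, hxy⟩ := x.2.2
  have hx0 : (x : S) ≠ 0 := x.2.1
  have ha0 : ((a : zdVerts S) : S) ≠ 0 := a.1.2.1
  have hwx : w ≠ (x : S) := fun h => hax (h ▸ haw)
  obtain ⟨w', hw'⟩ := mk w _ hw0 ha0 (by rw [comm]; exact haw) hwx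
  have r1 := cv_reach S x a w' (by rw [hw']; exact haw)
  by_cases h1 : w * (x : S) = 0
  · exact r1.trans (cv_reach S x w' z (by rw [hw']; exact key _ h1))
  by_cases h2 : w * y = 0
  · have hyx : y ≠ (x : S) := fun h => h1 (h ▸ h2)
    obtain ⟨y', hy'⟩ := mk y _ hy0 hx0 (by rw [comm]; exact hxy) hyx
    have r2 := cv_reach S x w' y' (by rw [hw', hy']; exact h2)
    exact (r1.trans r2).trans
      (cv_reach S x y' z (by rw [hy']; exact key _ (by rw [comm]; exact hxy)))
  · have h3 : ((a : zdVerts S) : S) * (w * y) = 0 := by rw [← mul_assoc, haw, zero_mul]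
    have h4 : (w * y) * (x : S) = 0 := by rw [mul_assoc, comm y, hxy, mul_zero]
    obtain ⟨v', hv'⟩ := mk (w * y) _ h2 hx0 h4 (fun h => hax (h ▸ h3))
    have r2 := cv_reach S x a v' (by rw [hv']; exact h3)
    exact r2.trans (cv_reach S x v' z (by rw [hv']; exact key _ h4))

/-- If `x` is a cut vertex of `Γ(S)`, then `{0, x}` is an ideal of
`S`; moreover either `x` is adjacent to every other vertex of `Γ(S)`, or `x ∈ Sx`. -/
theorem cut_vertex_ideal (x : zdVerts S)
    (hcut : ¬ ((zdGraph S).induce ({x}ᶜ : Set (zdVerts S))).Connected) :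
    IsIdeal S {(0 : S), (x : S)} ∧
      ((∀ y : zdVerts S, y ≠ x → (zdGraph S).Adj x y) ∨ ∃ s : S, s * (x : S) = (x : S)) := by
  have comm := CommSemigroupWithZero.mul_comm (S := S)
  have main : ∀ s : S, (x : S) * s = 0 ∨ (x : S) * s = (x : S) := by
    intro s
    by_contra! hcon
    obtain ⟨h0, hx⟩ := hcon
    obtain ⟨y, hy0, hxy⟩ := x.2.2
    have hk : ((x : S) * s) * y = 0 := by rw [comm (x : S), mul_assoc, hxy, mul_zero]
    let z : ({x}ᶜ : Set (zdVerts S)) :=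
      ⟨⟨(x : S) * s, h0, y, hy0, hk⟩, fun h => hx (congrArg Subtype.val h)⟩
    apply hcut
    have hr := cv_reach_mul S x s z rfl
    exact { preconnected := fun a b => (hr a).trans (hr b).symm, nonempty := ⟨z⟩ }
  refine ⟨⟨⟨0, Or.inl rfl⟩, ?_⟩, ?_⟩
  · rintro u (rfl | rfl) s
    · left; exact zero_mul s
    · exact main s
  · by_contra! hcon
    obtain ⟨⟨y, hyx, hy⟩, h2⟩ := hcon
    rcases main (y : S) with h | h
    · exact hy ⟨hyx.symm, h⟩
    · exact h2 y (by rw [comm]; exact h)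
end

section
/- Assume Z(S)* is finite and nonempty. Let C be the set of vertices of Γ(S) whose eccentricity equals the radius of Γ(S) (the vertex set of the center of Γ(S)). Then C ∪ {0} is an ideal of S. -/
variable (S : Type*) [CommSemigroupWithZero S]

theorem zd_walk_one (x y : zdVerts S) (h : (x : S) * y = 0) :
    ∃ p : (zdGraph S).Walk x y, p.length ≤ 1 := by
  by_cases e : x = y
  · subst e
    exact ⟨SimpleGraph.Walk.nil, by simp⟩
  · have hadj : (zdGraph S).Adj x y := ⟨e, h⟩
    exact ⟨hadj.toWalk, by simp⟩

theorem zd_walk_two (x y : zdVerts S) (w : S) (hw : w ≠ 0) (hx : (x : S) * w = 0)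
    (hy : (y : S) * w = 0) : ∃ p : (zdGraph S).Walk x y, p.length ≤ 2 := by
  have hwx : w * x = 0 := by rw [CommSemigroupWithZero.mul_comm]; exact hx
  have hwy : w * y = 0 := by rw [CommSemigroupWithZero.mul_comm]; exact hy
  let w' : zdVerts S := ⟨w, hw, x, x.2.1, hwx⟩
  obtain ⟨p, hp⟩ := zd_walk_one S x w' hx
  obtain ⟨q, hq⟩ := zd_walk_one S w' y hwy
  exact ⟨p.append q, by rw [SimpleGraph.Walk.length_append]; omega⟩

theorem zd_walk_three (x y : zdVerts S) : ∃ p : (zdGraph S).Walk x y, p.length ≤ 3 := by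
  obtain ⟨a, ha, hxa⟩ := x.2.2
  obtain ⟨b, hb, hyb⟩ := y.2.2
  by_cases hab : a * b = 0
  · have hax : a * x = 0 := by rw [CommSemigroupWithZero.mul_comm]; exact hxa
    let a' : zdVerts S := ⟨a, ha, x, x.2.1, hax⟩
    obtain ⟨p, hp⟩ := zd_walk_one S x a' hxa
    obtain ⟨q, hq⟩ := zd_walk_two S a' y b hb hab hyb
    exact ⟨p.append q, by rw [SimpleGraph.Walk.length_append]; omega⟩
  · obtain ⟨p, hp⟩ := zd_walk_two S x y (a * b) hab
      (by rw [← mul_assoc, hxa, zero_mul])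
      (by rw [CommSemigroupWithZero.mul_comm a b, ← mul_assoc, hyb, zero_mul])
    exact ⟨p, by omega⟩

theorem zd_dist_one (x y : zdVerts S) (h : (zdGraph S).dist x y ≤ 1) :
    x = y ∨ (x : S) * y = 0 := by
  obtain ⟨p0, -⟩ := zd_walk_three S x y
  obtain ⟨p, hp⟩ := p0.reachable.exists_walk_length_eq_dist
  rw [← hp] at h
  match p, h with
  | .nil, _ => exact Or.inl rfl
  | .cons e .nil, _ => exact Or.inr e.2
  | .cons _ (.cons _ _), h => simp at h

theorem zd_dist_two (x y : zdVerts S) (h : (zdGraph S).dist x y ≤ 2) :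
    (x : S) * y = 0 ∨ ∃ w : S, w ≠ 0 ∧ (x : S) * w = 0 ∧ (y : S) * w = 0 := by
  obtain ⟨p0, -⟩ := zd_walk_three S x y
  obtain ⟨p, hp⟩ := p0.reachable.exists_walk_length_eq_dist
  rw [← hp] at h
  match p, h with
  | .nil, _ =>
    obtain ⟨w, hw, hxw⟩ := x.2.2
    exact Or.inr ⟨w, hw, hxw, hxw⟩
  | .cons e .nil, _ => exact Or.inl e.2
  | .cons (v := w) e (.cons f .nil), _ =>
    exact Or.inr ⟨w, w.2.1, e.2, f.symm.2⟩
  | .cons _ (.cons _ (.cons _ _)), h => simp at h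

theorem zd_dist_mul (a b : zdVerts S) (s : S) (hb : (b : S) = a * s) (n : ℕ)
    (h : ∀ z, (zdGraph S).dist a z ≤ n) (z : zdVerts S) : (zdGraph S).dist b z ≤ n := by
  have key : ∀ w : S, (a : S) * w = 0 → (b : S) * w = 0 := by
    intro w hw
    rw [hb, CommSemigroupWithZero.mul_comm (a : S) s, mul_assoc, hw, mul_zero]
  have one : (b : S) * z = 0 → (zdGraph S).dist b z ≤ 1 := by
    intro e
    obtain ⟨p, hp⟩ := zd_walk_one S b z e
    exact (SimpleGraph.dist_le p).trans hp
  by_cases h3 : 3 ≤ n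
  · obtain ⟨p, hp⟩ := zd_walk_three S b z
    exact ((SimpleGraph.dist_le p).trans hp).trans h3
  by_cases h2 : n = 2
  · subst h2
    rcases zd_dist_two S a z (h z) with e | ⟨w, hw, e, f⟩
    · exact (one (key _ e)).trans (by norm_num)
    · obtain ⟨p, hp⟩ := zd_walk_two S b z w hw (key _ e) f
      exact (SimpleGraph.dist_le p).trans hp
  rcases zd_dist_one S a b ((h b).trans (by omega)) with e | e
  · rw [← e]; exact h z
  by_cases h1 : n = 1
  · subst h1
    apply one
    rcases zd_dist_one S a z (h z) with f | f
    · rw [← f, CommSemigroupWithZero.mul_comm]; exact e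
    · exact key _ f
  · have h0 : n = 0 := by omega
    subst h0
    obtain ⟨p, -⟩ := zd_walk_three S a b
    have hab : a = b := p.reachable.dist_eq_zero_iff.mp (Nat.le_zero.mp (h b))
    rw [← hab]; exact h z

/-- If `Z(S)*` is finite and nonempty, then the vertex set of the
center of `Γ(S)` (the vertices whose eccentricity equals the radius, i.e. the vertices
of minimum eccentricity), together with `0`, is an ideal of `S`. -/
theorem center_union_zero_isIdeal [Fintype (zdVerts S)] (hne : (zdVerts S).Nonempty) :
    IsIdeal S
      ({a : S | ∃ ha : a ∈ zdVerts S, ∀ u : zdVerts S,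
          (Finset.univ.sup fun z : zdVerts S => (zdGraph S).dist ⟨a, ha⟩ z) ≤
            Finset.univ.sup fun z : zdVerts S => (zdGraph S).dist u z} ∪ {0}) := by
  refine ⟨⟨0, Or.inr rfl⟩, ?_⟩
  rintro x (⟨ha, hx⟩ | hx) s
  · by_cases h0 : x * s = 0
    · exact Or.inr h0
    · obtain ⟨y, hy, hxy⟩ := ha.2
      have hb : x * s ∈ zdVerts S := ⟨h0, y, hy, by
        rw [CommSemigroupWithZero.mul_comm x s, mul_assoc, hxy, mul_zero]⟩
      refine Or.inl ⟨hb, fun u => le_trans ?_ (hx u)⟩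
      refine Finset.sup_le fun z _ => ?_
      exact zd_dist_mul S ⟨x, ha⟩ ⟨x * s, hb⟩ s rfl _
        (fun z => Finset.le_sup (f := fun z => (zdGraph S).dist ⟨x, ha⟩ z) (Finset.mem_univ z)) z
  · right
    have hx' : x = 0 := hx
    show x * s = 0
    rw [hx', zero_mul]
end

section
/- Let e = xy be a bridge of Γ(S) (an edge whose removal disconnects Γ(S)) such that each of the two connected components of Γ(S) − e has at least two vertices. Then Sx = {0, x} and Sy = {0, y}, where Sx = {s·x : s ∈ S}; in particular {0,x} and {0,y} are ideals of S. -/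
variable (S : Type*) [CommSemigroupWithZero S]

theorem half_bridge (x y a b : zdVerts S) (hxy : (x : S) * y = 0)
    (hnr : ¬ ((zdGraph S) \ SimpleGraph.fromEdgeSet {s(x, y)}).Reachable x y)
    (hax : a ≠ x) (hay : a ≠ y) (hbx : b ≠ x) (hby : b ≠ y)
    (hxa : (x : S) * a = 0) (hyb : (y : S) * b = 0) :
    (Set.range (fun s : S => s * (x : S)) = {0, (x : S)}) ∧ IsIdeal S {0, (x : S)} := by
  have adj : ∀ u v : zdVerts S, u ≠ v → (u : S) * v = 0 → s(u, v) ≠ s(x, y) →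
      ((zdGraph S) \ SimpleGraph.fromEdgeSet {s(x, y)}).Reachable u v := by
    intro u v huv h hne
    apply SimpleGraph.Adj.reachable
    rw [SimpleGraph.sdiff_adj, SimpleGraph.fromEdgeSet_adj]
    exact ⟨⟨huv, h⟩, fun h => hne h.1⟩
  have hxA := adj x a hax.symm hxa (by simp [Sym2.eq_iff]; tauto)
  -- no common neighbour
  have tri : ∀ c : zdVerts S, c ≠ x → c ≠ y → (x : S) * c = 0 → (c : S) * y = 0 → False := by
    intro c h1 h2 h3 h4
    exact hnr ((adj x c h1.symm h3 (by simp [Sym2.eq_iff]; tauto)).trans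
      (adj c y h2 h4 (by simp [Sym2.eq_iff]; tauto)))
  have sub : ∀ s : S, s * (x : S) = 0 ∨ s * (x : S) = x := by
    intro s
    by_contra! hc
    obtain ⟨h0, h1⟩ := hc
    have ma : s * (x : S) * a = 0 := by rw [mul_assoc, hxa, mul_zero]
    have my : s * (x : S) * y = 0 := by rw [mul_assoc, hxy, mul_zero]
    let c : zdVerts S := ⟨s * x, h0, y, y.2.1, my⟩
    have hcx : c ≠ x := fun h => h1 (congrArg Subtype.val h)
    by_cases hcy : c = y
    · have e : s * (x : S) = y := congrArg Subtype.val hcy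
      rw [e, CommSemigroupWithZero.mul_comm] at ma
      exact tri a hax hay hxa ma
    by_cases hca : c = a
    · have e : s * (x : S) = a := congrArg Subtype.val hca
      rw [e] at my
      exact tri a hax hay hxa my
    have ma' : (a : S) * c = 0 := by rw [CommSemigroupWithZero.mul_comm]; exact ma
    exact hnr ((hxA.trans (adj a c (Ne.symm hca) ma' (by simp [Sym2.eq_iff]; tauto))).trans
      (adj c y hcy my (by simp [Sym2.eq_iff]; tauto)))
  have hbx' : (b : S) * x = x := by
    rcases sub b with h | h
    · exact (tri b hbx hby (by rw [CommSemigroupWithZero.mul_comm]; exact h)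
        (by rw [CommSemigroupWithZero.mul_comm]; exact hyb)).elim
    · exact h
  refine ⟨?_, ⟨0, by simp⟩, ?_⟩
  · ext t
    constructor
    · rintro ⟨s, rfl⟩
      exact sub s
    · rintro (rfl | h)
      · exact ⟨0, zero_mul _⟩
      · exact ⟨b, hbx'.trans (Eq.symm h)⟩
  · rintro t (rfl | h) s
    · left; exact zero_mul s
    · have h' : t = x := h
      rw [h', CommSemigroupWithZero.mul_comm]
      exact sub s

theorem exists_nbr (x y : zdVerts S)
    (hx2 : ∃ u : zdVerts S, u ≠ x ∧
      ((zdGraph S) \ SimpleGraph.fromEdgeSet {s(x, y)}).Reachable x u) :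
    ∃ a : zdVerts S, a ≠ x ∧ a ≠ y ∧ (x : S) * a = 0 := by
  obtain ⟨u, hu, ⟨w⟩⟩ := hx2
  cases w with
  | nil => exact (hu rfl).elim
  | cons h p =>
    rename_i a
    rw [SimpleGraph.sdiff_adj, SimpleGraph.fromEdgeSet_adj] at h
    obtain ⟨⟨h1, h2⟩, h3⟩ := h
    refine ⟨a, h1.symm, ?_, h2⟩
    rintro rfl
    exact h3 ⟨rfl, h1⟩

/-- If `e = xy` is a bridge of `Γ(S)` such that each of the two
connected components of `Γ(S) − e` (the components of `x` and of `y`) has at least two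
vertices, then `Sx = {0, x}` and `Sy = {0, y}`; in particular `{0, x}` and `{0, y}`
are ideals of `S`. -/
theorem bridge_big_components (x y : zdVerts S)
    (hbr : s(x, y) ∈ (zdGraph S).edgeSet ∧ (zdGraph S).IsBridge s(x, y))
    (hx2 : ∃ u : zdVerts S, u ≠ x ∧
      ((zdGraph S) \ SimpleGraph.fromEdgeSet {s(x, y)}).Reachable x u)
    (hy2 : ∃ u : zdVerts S, u ≠ y ∧
      ((zdGraph S) \ SimpleGraph.fromEdgeSet {s(x, y)}).Reachable y u) :
    (Set.range (fun s : S => s * (x : S)) = {0, (x : S)}) ∧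
    (Set.range (fun s : S => s * (y : S)) = {0, (y : S)}) ∧
    IsIdeal S {0, (x : S)} ∧ IsIdeal S {0, (y : S)} := by
  obtain ⟨hadj, hb⟩ := hbr
  have hxy : (x : S) * y = 0 := hadj.2
  have hnr := hb
  rw [SimpleGraph.isBridge_iff] at hnr
  obtain ⟨a, hax, hay, hxa⟩ := exists_nbr S x y hx2
  obtain ⟨b, hby, hbx, hyb⟩ := exists_nbr S y x (by rw [Sym2.eq_swap]; exact hy2)
  obtain ⟨h1, h2⟩ := half_bridge S x y a b hxy hnr hax hay hbx hby hxa hyb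
  obtain ⟨h3, h4⟩ := half_bridge S y x b a
    (by rw [CommSemigroupWithZero.mul_comm]; exact hxy)
    (by rw [Sym2.eq_swap]; exact fun h => hnr h.symm) hby hbx hay hax hyb hxa
  exact ⟨h1, h3, h2, h4⟩
end

section
/- Let S be a reduced commutative semigroup with zero such that Γ(S) contains no infinite clique. Then S satisfies the ascending chain condition on annihilators: there is no strictly increasing sequence Ann(x₁) ⊊ Ann(x₂) ⊊ Ann(x₃) ⊊ ⋯ of annihilators of elements of S. -/
variable (S : Type*) [CommSemigroupWithZero S]

/-- If `S` is reduced and `Γ(S)` contains no infinite clique, then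
`S` satisfies the ascending chain condition on annihilators. -/
theorem acc_on_annihilators
    (hred : ∀ x : S, IsNil S x → x = 0)
    (hclique : ∀ T : Set (zdVerts S), (zdGraph S).IsClique T → T.Finite) :
    ¬ ∃ x : ℕ → S, ∀ n : ℕ, Ann S (x n) ⊂ Ann S (x (n + 1)) := by
  rintro ⟨x, hx⟩
  have hmono : Monotone (fun n => Ann S (x n)) := monotone_nat_of_le_succ fun n => (hx n).1
  have hex : ∀ n, ∃ a : S, a * x (n + 1) = 0 ∧ a * x n ≠ 0 := by
    intro n
    obtain ⟨a, h1, h2⟩ := Set.exists_of_ssubset (hx n)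
    exact ⟨a, h1, h2⟩
  choose a ha hne using hex
  have hlt : ∀ m n, m < n → (a m * x m) * (a n * x n) = 0 := by
    intro m n h
    have h0 : a m * x n = 0 := hmono (Nat.succ_le_of_lt h) (ha m)
    rw [CommSemigroupWithZero.mul_comm (a n), CommSemigroupWithZero.mul_comm (a m),
      mul_assoc, ← mul_assoc (a m), h0, zero_mul, mul_zero]
  have hprod : ∀ m n, m ≠ n → (a m * x m) * (a n * x n) = 0 := by
    intro m n h
    rcases lt_or_gt_of_ne h with h | h
    · exact hlt m n h
    · rw [CommSemigroupWithZero.mul_comm]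
      exact hlt n m h
  let y : ℕ → zdVerts S := fun n =>
    ⟨a n * x n, hne n, a (n + 1) * x (n + 1), hne (n + 1), hlt n (n + 1) (Nat.lt_succ_self n)⟩
  have hinj : Function.Injective y := by
    intro m n h
    by_contra hmn
    have h1 : a m * x m = a n * x n := congrArg Subtype.val h
    have h2 := hprod m n hmn
    rw [← h1] at h2
    exact hne m (hred _ ⟨1, h2⟩)
  refine Set.infinite_range_of_injective hinj (hclique _ ?_)
  rintro _ ⟨m, rfl⟩ _ ⟨n, rfl⟩ h
  exact ⟨h, hprod m n fun e => h (congrArg y e)⟩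
end

section
/- Let x, y ∈ S be such that p = Ann(x) and q = Ann(y) are two distinct prime ideals of S. Then x·y = 0. -/
variable (S : Type*) [CommSemigroupWithZero S]

/-- If `p = Ann x` and `q = Ann y` are two distinct prime ideals of
`S`, then `x · y = 0`. -/
theorem mul_eq_zero_of_distinct_associated_primes (x y : S)
    (hp : IsPrimeIdeal S (Ann S x)) (hq : IsPrimeIdeal S (Ann S y))
    (hne : Ann S x ≠ Ann S y) :
    x * y = 0 := by
  by_contra hxy
  have hyx : ¬ y * x = 0 := fun h => hxy (by rw [CommSemigroupWithZero.mul_comm]; exact h)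
  have key : ∀ a b : S, IsPrimeIdeal S (Ann S b) → ¬ a * b = 0 → Ann S a ⊆ Ann S b := by
    intro a b hb hab s hs
    have hs' : s * a = 0 := hs
    rcases hb.2 s a (fun t => by
      change s * t * a * b = 0
      rw [CommSemigroupWithZero.mul_comm s t, mul_assoc t s a, hs', mul_zero, zero_mul]) with h | h
    · exact h
    · exact absurd h hab
  exact hne (Set.Subset.antisymm (key x y hq hxy) (key y x hp hyx))
end

section
/- Let S be a reduced commutative semigroup with zero and suppose Γ(S) is a complete r-partite graph with parts V₁, V₂, …, V_r. Then for every t with 1 ≤ t ≤ r, the set V_t ∪ {0} is an ideal of S and p_t = Z(S) \ V_t is a prime ideal of S. -/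
variable (S : Type*) [CommSemigroupWithZero S]

/-- If `S` is reduced and `Γ(S)` is a complete `r`-partite graph
with parts `V₁, …, V_r`, then for every `t`, `V_t ∪ {0}` is an ideal of `S` and
`p_t = Z(S) \ V_t` is a prime ideal of `S`. -/
theorem complete_r_partite_parts_ideal_prime
    (hred : ∀ x : S, IsNil S x → x = 0)
    (r : ℕ) (hr : 1 ≤ r) (V : Fin r → Set S)
    (hne : ∀ i, (V i).Nonempty)
    (hdisj : Pairwise fun i j => Disjoint (V i) (V j))
    (hcover : (⋃ i, V i) = zdVerts S)
    (hadj : ∀ x y : S, x ∈ zdVerts S → y ∈ zdVerts S → x ≠ y →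
      (x * y = 0 ↔ ¬ ∃ i, x ∈ V i ∧ y ∈ V i))
    (t : Fin r) :
    IsIdeal S (V t ∪ {0}) ∧ IsPrimeIdeal S (zdivs S \ V t) := by
  have mc : ∀ a b : S, a * b = b * a := CommSemigroupWithZero.mul_comm
  have hsq : ∀ x : S, x * x = 0 → x = 0 := fun x h => hred x ⟨1, by simpa using h⟩
  have hV : ∀ i, ∀ x ∈ V i, x ∈ zdVerts S := fun i x hx => by
    rw [← hcover]; exact Set.mem_iUnion.2 ⟨i, hx⟩
  -- the product of a vertex with an element of `V t` vanishes iff the vertex is outside `V t`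
  have key : ∀ x ∈ V t, ∀ z ∈ zdVerts S, (z * x = 0 ↔ z ∉ V t) := by
    intro x hx z hz
    by_cases hzx : z = x
    · subst hzx
      exact ⟨fun h => absurd (hsq z h) hz.1, fun h => absurd hx h⟩
    · rw [hadj z x hz (hV t x hx) hzx]
      constructor
      · intro h hzt
        exact h ⟨t, hzt, hx⟩
      · rintro h ⟨i, hzi, hxi⟩
        by_cases hit : i = t
        · subst hit; exact h hzi
        · exact Set.disjoint_left.1 (hdisj hit) hxi hx
  have hideal : ∀ x ∈ V t, ∀ s : S, x * s ≠ 0 → x * s ∈ V t := by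
    intro x hx s hs
    obtain ⟨y, hy, hxy⟩ := (hV t x hx).2
    have hz : x * s ∈ zdVerts S :=
      ⟨hs, y, hy, by rw [mc x s, mul_assoc, hxy, mul_zero]⟩
    by_contra hn
    have h := (key x hx _ hz).2 hn
    exact hs (hsq _ (by rw [← mul_assoc, h, zero_mul]))
  obtain ⟨v, hv⟩ := hne t
  have hv0 : v ≠ 0 := (hV t v hv).1
  have hann : ∀ z : S, z ∈ zdivs S \ V t ↔ z * v = 0 := by
    intro z
    constructor
    · rintro ⟨hz, hzt⟩
      by_cases h0 : z = 0
      · rw [h0, zero_mul]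
      · exact (key v hv z ⟨h0, hz⟩).2 hzt
    · intro h
      exact ⟨⟨v, hv0, h⟩, fun hzt => (key v hv z (hV t z hzt)).1 h hzt⟩
  refine ⟨⟨⟨0, Or.inr rfl⟩, ?_⟩, ⟨⟨0, (hann 0).2 (zero_mul v)⟩, ?_⟩, ?_⟩
  · rintro x (hx | hx) s
    · by_cases h : x * s = 0
      · exact Or.inr h
      · exact Or.inl (hideal x hx s h)
    · right
      rw [Set.mem_singleton_iff] at hx ⊢
      rw [hx, zero_mul]
  · intro x hx s
    rw [hann] at hx ⊢
    rw [mc x s, mul_assoc, hx, mul_zero]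
  · intro x y h
    by_contra! hc
    rw [hann, hann] at hc
    obtain ⟨h1, h2⟩ := hc
    rw [mc] at h1 h2
    have a1 := hideal v hv x h1
    have a2 := hideal v hv y h2
    have h3 := (hann _).1 (h v)
    refine (key _ a2 _ (hV t _ a1)).1 ?_ a1
    rw [mc v x, mc v y, ← mul_assoc]
    exact h3
end

section
/- Let S be a reduced commutative semigroup with zero. If Γ(S) is bipartite (its vertex set can be partitioned into two nonempty parts such that no edge joins two vertices of the same part), then Γ(S) is a complete bipartite graph. -/
variable (S : Type*) [CommSemigroupWithZero S]

/-- If `S` is reduced and `Γ(S)` is bipartite (its vertex set is the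
disjoint union of two nonempty parts with no edge inside a part), then `Γ(S)` is a
complete bipartite graph: any two vertices in different parts are adjacent. -/
theorem bipartite_implies_complete_bipartite
    (hred : ∀ x : S, IsNil S x → x = 0)
    (V₁ V₂ : Set S) (h1 : V₁.Nonempty) (h2 : V₂.Nonempty)
    (hdisj : Disjoint V₁ V₂) (hcover : V₁ ∪ V₂ = zdVerts S)
    (hpart : ∀ x y : S, ((x ∈ V₁ ∧ y ∈ V₁) ∨ (x ∈ V₂ ∧ y ∈ V₂)) → x ≠ y → x * y ≠ 0) :
    ∀ x ∈ V₁, ∀ y ∈ V₂, x * y = 0 := by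
  have comm : ∀ a b : S, a * b = b * a := CommSemigroupWithZero.mul_comm
  have sq : ∀ a : S, a * a = 0 → a = 0 := fun a h => hred a ⟨1, by simpa using h⟩
  have mem : ∀ a b : S, a ≠ 0 → b ≠ 0 → a * b = 0 → a ∈ V₁ ∨ a ∈ V₂ := by
    intro a b ha hb hab
    have h : a ∈ V₁ ∪ V₂ := by
      rw [hcover]
      exact ⟨ha, b, hb, hab⟩
    exact h
  intro x hx y hy
  by_contra hxy
  have hxz : x ∈ zdVerts S := hcover ▸ Or.inl hx
  have hyz : y ∈ zdVerts S := hcover ▸ Or.inr hy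
  obtain ⟨hx0, a, ha, hxa⟩ := hxz
  obtain ⟨hy0, b, hb, hyb⟩ := hyz
  have ha2 : a ∈ V₂ := by
    rcases mem a x ha hx0 (by rw [comm]; exact hxa) with h | h
    · exact absurd hxa (hpart x a (Or.inl ⟨hx, h⟩) (by rintro rfl; exact hx0 (sq _ hxa)))
    · exact h
  have hb1 : b ∈ V₁ := by
    rcases mem b y hb hy0 (by rw [comm]; exact hyb) with h | h
    · exact h
    · exact absurd hyb (hpart y b (Or.inr ⟨hy, h⟩) (by rintro rfl; exact hy0 (sq _ hyb)))
  have hxya : x * y * a = 0 := by rw [comm x y, mul_assoc, hxa, mul_zero]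
  have hxyb : x * y * b = 0 := by rw [mul_assoc, hyb, mul_zero]
  rcases mem (x * y) a hxy ha hxya with h | h
  · refine hpart (x * y) b (Or.inl ⟨h, hb1⟩) ?_ hxyb
    intro e
    rw [e] at hxyb
    exact hb (sq b hxyb)
  · refine hpart (x * y) a (Or.inr ⟨h, ha2⟩) ?_ hxya
    intro e
    rw [e] at hxya
    exact ha (sq a hxya)
end

section
/- Let S be a reduced commutative semigroup with zero. The following are equivalent: (1) the chromatic number χ(Γ(S)) is finite; (2) Γ(S) contains no infinite clique (the clique number ω(Γ(S)) is finite); (3) the zero ideal {0} of S is an intersection of finitely many prime ideals of S. -/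
variable (S : Type*) [CommSemigroupWithZero S]

section Helpers
variable {S}

theorem aux_comm (a b : S) : a * b = b * a := CommSemigroupWithZero.mul_comm a b

theorem aux_sq (hred : ∀ x : S, IsNil S x → x = 0) {x : S} (h : x * x = 0) : x = 0 :=
  hred x ⟨1, by simpa using h⟩

theorem aux_seq (hred : ∀ x : S, IsNil S x → x = 0)
    (h2 : ∀ T : Set (zdVerts S), (zdGraph S).IsClique T → T.Finite)
    (f : ℕ → S) (h0 : ∀ i, f i ≠ 0) (hm : ∀ i j, i ≠ j → f i * f j = 0) : False := by
  have hinj : Function.Injective f := by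
    intro i j hij
    by_contra hne
    have := hm i j hne
    rw [← hij] at this
    exact h0 i (aux_sq hred this)
  let g : ℕ → zdVerts S := fun i => ⟨f i, h0 i, f (i + 1), h0 _, hm _ _ (by omega)⟩
  have ginj : Function.Injective g := fun i j hij => hinj (congrArg Subtype.val hij)
  refine Set.infinite_range_of_injective ginj (h2 _ ?_)
  rintro _ ⟨i, rfl⟩ _ ⟨j, rfl⟩ hne
  exact ⟨hne, hm i j (fun h => hne (by rw [h]))⟩

theorem aux_wf (hred : ∀ x : S, IsNil S x → x = 0)
    (h2 : ∀ T : Set (zdVerts S), (zdGraph S).IsClique T → T.Finite) :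
    WellFounded (fun a b : S => Ann S b ⊂ Ann S a) := by
  rw [wellFounded_iff_isEmpty_descending_chain]
  refine ⟨?_⟩
  rintro ⟨a, ha⟩
  have hmono : Monotone (fun n => Ann S (a n)) :=
    monotone_nat_of_le_succ (fun n => (ha n).subset)
  choose x hx hx' using fun n => Set.exists_of_ssubset (ha n)
  have key : ∀ i j, i < j → (x i * a i) * (x j * a j) = 0 := by
    intro i j hij
    have h : x i * a j = 0 := hmono (Nat.succ_le_of_lt hij) (hx i)
    calc (x i * a i) * (x j * a j) = x i * ((a i * x j) * a j) := by simp only [mul_assoc]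
      _ = (x i * a j) * (a i * x j) := by rw [aux_comm (a i * x j), mul_assoc]
      _ = 0 := by rw [h, zero_mul]
  refine aux_seq hred h2 (fun i => x i * a i) (fun i => hx' i) ?_
  intro i j hij
  rcases lt_or_gt_of_ne hij with h | h
  · exact key i j h
  · show x i * a i * (x j * a j) = 0
    rw [aux_comm]; exact key j i h

/-- Maximal annihilator. -/
def MaxAnn (a : S) : Prop := a ≠ 0 ∧ ∀ b : S, b ≠ 0 → Ann S a ⊆ Ann S b → Ann S b = Ann S a

theorem aux_le (a b : S) : Ann S a ⊆ Ann S (b * a) := by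
  intro s (hs : s * a = 0)
  show s * (b * a) = 0
  rw [aux_comm b, ← mul_assoc, hs, zero_mul]

theorem aux_prime (hred : ∀ x : S, IsNil S x → x = 0) {a : S} (ha : MaxAnn a) :
    IsPrimeIdeal S (Ann S a) := by
  refine ⟨⟨⟨0, zero_mul a⟩, ?_⟩, ?_⟩
  · intro x (hx : x * a = 0) s
    show x * s * a = 0
    rw [mul_assoc, aux_comm s, ← mul_assoc, hx, zero_mul]
  · intro x y h
    by_contra! hc
    obtain ⟨hx, hy⟩ := hc
    have he := ha.2 (y * a) hy (aux_le a y)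
    have h1 : x * a * y * a = 0 := h a
    have h2 : x * a ∈ Ann S (y * a) := by
      show x * a * (y * a) = 0
      rw [← mul_assoc]; exact h1
    rw [he] at h2
    have h3 : x * a * a = 0 := h2
    apply hx
    apply aux_sq hred
    rw [aux_comm x a, aux_comm a x, ← mul_assoc, aux_comm (x * a) x, mul_assoc, h3, mul_zero]

theorem aux_exists (hred : ∀ x : S, IsNil S x → x = 0)
    (h2 : ∀ T : Set (zdVerts S), (zdGraph S).IsClique T → T.Finite) {x : S} (hx : x ≠ 0) :
    ∃ a, MaxAnn a ∧ Ann S x ⊆ Ann S a := by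
  obtain ⟨a, ⟨ha0, hxa⟩, hmin⟩ := (aux_wf hred h2).has_min
    {b : S | b ≠ 0 ∧ Ann S x ⊆ Ann S b} ⟨x, hx, subset_rfl⟩
  refine ⟨a, ⟨ha0, fun b hb hab => ?_⟩, hxa⟩
  by_contra hne
  exact hmin b ⟨hb, hxa.trans hab⟩ (hab.ssubset_of_ne (Ne.symm hne))

theorem aux_finite (hred : ∀ x : S, IsNil S x → x = 0)
    (h2 : ∀ T : Set (zdVerts S), (zdGraph S).IsClique T → T.Finite) :
    {p : Set S | ∃ a, MaxAnn a ∧ Ann S a = p}.Finite := by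
  by_contra hinf
  let e := Set.Infinite.natEmbedding _ hinf
  choose a ha hp using fun n => (e n).2
  refine aux_seq hred h2 a (fun i => (ha i).1) ?_
  intro i j hij
  by_contra hne
  apply hij
  have h1 := (ha j).2 _ hne (aux_le _ _)
  have h3 := (ha i).2 (a i * a j) hne (by rw [aux_comm (a i)]; exact aux_le _ _)
  apply e.injective
  apply Subtype.ext
  rw [← hp i, ← hp j, ← h1, ← h3]

end Helpers

/-- For a reduced commutative semigroup `S` with zero, the following
are equivalent: (1) the chromatic number of `Γ(S)` is finite; (2) `Γ(S)` contains no
infinite clique; (3) the zero ideal is an intersection of finitely many prime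
ideals. -/
theorem chromatic_finite_tfae
    (hred : ∀ x : S, IsNil S x → x = 0) :
    ((∃ n : ℕ, (zdGraph S).Colorable n) ↔
        (∀ T : Set (zdVerts S), (zdGraph S).IsClique T → T.Finite)) ∧
    ((∀ T : Set (zdVerts S), (zdGraph S).IsClique T → T.Finite) ↔
        (∃ (n : ℕ) (P : Fin n → Set S),
          (∀ i, IsPrimeIdeal S (P i)) ∧ (⋂ i, P i) = {0})) := by
  have h12 : (∃ n : ℕ, (zdGraph S).Colorable n) →
      (∀ T : Set (zdVerts S), (zdGraph S).IsClique T → T.Finite) := by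
    rintro ⟨n, ⟨c⟩⟩ T hT
    refine Set.Finite.of_injOn (f := c) (t := Set.univ) (fun _ _ => Set.mem_univ _) ?_
      Set.finite_univ
    intro x hx y hy hxy
    by_contra hne
    exact c.valid (hT hx hy hne) hxy
  have h23 : (∀ T : Set (zdVerts S), (zdGraph S).IsClique T → T.Finite) →
      (∃ (n : ℕ) (P : Fin n → Set S),
          (∀ i, IsPrimeIdeal S (P i)) ∧ (⋂ i, P i) = {0}) := by
    intro h2
    have hfin := aux_finite hred h2
    obtain ⟨n, P, -, hP⟩ := hfin.fin_param
    have hPm : ∀ i, ∃ a, MaxAnn a ∧ Ann S a = P i := fun i => by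
      have : P i ∈ Set.range P := ⟨i, rfl⟩
      rwa [hP] at this
    have hpr : ∀ i, IsPrimeIdeal S (P i) := fun i => by
      obtain ⟨a, ha, he⟩ := hPm i
      rw [← he]
      exact aux_prime hred ha
    refine ⟨n, P, hpr, ?_⟩
    apply Set.Subset.antisymm
    · intro x hx
      by_contra hx0
      obtain ⟨a, ha, hxa⟩ := aux_exists hred h2 (x := x) hx0
      have : Ann S a ∈ Set.range P := by rw [hP]; exact ⟨a, ha, rfl⟩
      obtain ⟨i, hi⟩ := this
      have hxi : x ∈ P i := Set.mem_iInter.1 hx i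
      rw [hi] at hxi
      have hxa0 : x * a = 0 := hxi
      have : a ∈ Ann S x := by
        show a * x = 0
        rw [aux_comm]; exact hxa0
      exact ha.1 (aux_sq hred (hxa this))
    · rintro _ rfl
      refine Set.mem_iInter.2 fun i => ?_
      obtain ⟨a, ha, he⟩ := hPm i
      rw [← he]
      exact zero_mul a
  have h31 : (∃ (n : ℕ) (P : Fin n → Set S),
          (∀ i, IsPrimeIdeal S (P i)) ∧ (⋂ i, P i) = {0}) →
      (∃ n : ℕ, (zdGraph S).Colorable n) := by
    rintro ⟨n, P, hpr, hI⟩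
    have h0 : ∀ i, (0 : S) ∈ P i := by
      have : (0 : S) ∈ ⋂ i, P i := by rw [hI]; rfl
      exact Set.mem_iInter.1 this
    have hex : ∀ x : zdVerts S, ∃ i, (x : S) ∉ P i := by
      intro x
      by_contra! hc
      have : (x : S) ∈ ⋂ i, P i := Set.mem_iInter.2 hc
      rw [hI] at this
      exact x.2.1 this
    choose c hc using hex
    refine ⟨n, ⟨SimpleGraph.Coloring.mk c ?_⟩⟩
    rintro x y ⟨-, hxy⟩ heq
    rcases (hpr (c x)).2 x y (fun s => by
      rw [mul_assoc, aux_comm s, ← mul_assoc, hxy, zero_mul]; exact h0 _) with h | h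
    · exact hc x h
    · rw [heq] at h; exact hc y h
  exact ⟨⟨h12, fun h => h31 (h23 h)⟩, ⟨h23, fun h => h12 (h31 h)⟩⟩
end

section
/- Let S be a commutative semigroup with zero and let n ≤ 2 be a positive integer. Then χ(Γ(S)) = n if and only if ω(Γ(S)) = n. -/
variable (S : Type*) [CommSemigroupWithZero S]

theorem zd_colorable_of_adj {n : ℕ} (P : zdVerts S → Prop) (hn : n = 2)
    (h : ∀ x y, (zdGraph S).Adj x y → ¬ (P x ↔ P y)) : (zdGraph S).Colorable n := by
  classical
  subst hn
  refine ⟨SimpleGraph.Coloring.mk (fun v => if P v then (0 : Fin 2) else 1) ?_⟩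
  intro x y hxy
  have := h x y hxy
  by_cases hx : P x <;> by_cases hy : P y <;> simp_all

theorem zd_two_colorable
    (H : ∀ x y z : S, x ≠ 0 → y ≠ 0 → z ≠ 0 → x ≠ y → x ≠ z → y ≠ z →
      x * y = 0 → x * z = 0 → y * z = 0 → False) : (zdGraph S).Colorable 2 := by
  have mc : ∀ a b : S, a * b = b * a := CommSemigroupWithZero.mul_comm
  have ma : ∀ a b c : S, a * b * c = a * (b * c) := mul_assoc
  have kz : ∀ a b c d : S, a * c = 0 → (a * b) * (c * d) = 0 := by
    intro a b c d h
    rw [ma, ← ma b, mc b c, ma c, ← ma, h, zero_mul]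
  have k1 : ∀ a b c : S, a * c = 0 → (a * b) * c = 0 := by
    intro a b c h
    rw [mc a b, ma, h, mul_zero]
  by_cases hred : ∃ z : S, z ≠ 0 ∧ z * z = 0
  · obtain ⟨z, hz, hzz⟩ := hred
    refine zd_colorable_of_adj S (fun v => (v : S) * z = 0 ∧ (v : S) ≠ z) rfl ?_
    rintro ⟨x, hx0, _⟩ ⟨y, hy0, _⟩ ⟨hne, hxy⟩ hiff
    have hne : x ≠ y := fun h => hne (Subtype.ext h)
    change x * y = 0 at hxy
    have hyx : y * x = 0 := by rw [mc]; exact hxy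
    simp only at hiff
    by_cases hx : x * z = 0 ∧ x ≠ z
    · have hy := hiff.1 hx
      exact H x y z hx0 hy0 hz hne hx.2 hy.2 hxy hx.1 hy.1
    · have hy : ¬ (y * z = 0 ∧ y ≠ z) := fun h => hx (hiff.2 h)
      have hxz : x ≠ z := by
        rintro rfl
        exact hy ⟨hyx, fun h => hne h.symm⟩
      have hyz : y ≠ z := by
        rintro rfl
        exact hx ⟨hxy, hne⟩
      have hc : x * z ≠ 0 := fun h => hx ⟨h, hxz⟩
      have hd : y * z ≠ 0 := fun h => hy ⟨h, hyz⟩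
      have hcz : x * z * z = 0 := by rw [ma, hzz, mul_zero]
      have hdz : y * z * z = 0 := by rw [ma, hzz, mul_zero]
      have hcy : x * z * y = 0 := k1 _ _ _ hxy
      have hdx : y * z * x = 0 := k1 _ _ _ hyx
      refine H (x * z) (y * z) z hc hd hz ?_ ?_ ?_ (kz _ _ _ _ hxy) hcz hdz
      · intro he
        refine H x y (x * z) hx0 hy0 hc hne ?_ ?_ hxy ?_ ?_
        · intro h; rw [← h] at hcz; exact hc hcz
        · intro h; rw [← h] at hcz; exact hd hcz
        · rw [mc, he]; exact hdx
        · rw [mc]; exact hcy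
      · intro h; rw [h, mc] at hcy; exact hd hcy
      · intro h; rw [h, mc] at hdx; exact hc hdx
  · have red : ∀ z : S, z * z = 0 → z = 0 := by
      intro z h
      by_contra h0
      exact hred ⟨z, h0, h⟩
    by_cases hE : ∃ a b, (zdGraph S).Adj a b
    · obtain ⟨⟨a, ha0, _⟩, ⟨b, hb0, _⟩, _, hab⟩ := hE
      change a * b = 0 at hab
      refine zd_colorable_of_adj S (fun v => (v : S) * a = 0) rfl ?_
      rintro ⟨x, hx0, _⟩ ⟨y, hy0, _⟩ ⟨hne, hxy⟩ hiff
      have hne : x ≠ y := fun h => hne (Subtype.ext h)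
      change x * y = 0 at hxy
      simp only at hiff
      have hb : ∀ t, t * a * b = 0 := fun t => by rw [ma, hab, mul_zero]
      by_cases hx : x * a = 0
      · have hy := hiff.1 hx
        refine H x y a hx0 hy0 ha0 hne ?_ ?_ hxy hx hy
        · rintro rfl; exact hx0 (red _ hx)
        · rintro rfl; exact hy0 (red _ hy)
      · have hy : ¬ y * a = 0 := fun h => hx (hiff.2 h)
        have hp := kz x a y a hxy
        refine H (x * a) (y * a) b hx hy hb0 ?_ ?_ ?_ hp (hb x) (hb y)
        · intro h; rw [← h] at hp; exact hx (red _ hp)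
        · intro h; have := hb x; rw [h] at this; exact hb0 (red _ this)
        · intro h; have := hb y; rw [h] at this; exact hb0 (red _ this)
    · exact zd_colorable_of_adj S (fun _ => True) rfl (fun x y h => (hE ⟨x, y, h⟩).elim)

theorem zd_colorable_one (h : ∀ x y, ¬ (zdGraph S).Adj x y) : (zdGraph S).Colorable 1 :=
  ⟨SimpleGraph.Coloring.mk (fun _ => (0 : Fin 1)) (fun {x y} hxy => (h x y hxy).elim)⟩

/-- For a commutative semigroup `S` with zero and a positive
integer `n ≤ 2`, the chromatic number of `Γ(S)` equals `n` if and only if the clique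
number of `Γ(S)` equals `n` (there is a clique of size `n` and every clique has at
most `n` vertices). -/
theorem chromatic_eq_iff_clique_eq_of_le_two (n : ℕ) (hpos : 1 ≤ n) (hle : n ≤ 2) :
    (zdGraph S).chromaticNumber = n ↔
      ((∃ T : Finset (zdVerts S), (zdGraph S).IsNClique n T) ∧
        ∀ T : Finset (zdVerts S), (zdGraph S).IsClique ↑T → T.card ≤ n) := by
  classical
  constructor
  · intro h
    have hcol : (zdGraph S).Colorable n :=
      SimpleGraph.chromaticNumber_le_iff_colorable.1 h.le
    refine ⟨?_, fun T hT => hT.card_le_of_colorable hcol⟩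
    interval_cases n
    · have hne : Nonempty (zdVerts S) := by
        by_contra hemp
        rw [not_nonempty_iff] at hemp
        have h0 : (zdGraph S).chromaticNumber ≤ (0 : ℕ) :=
          SimpleGraph.chromaticNumber_le_iff_colorable.2 (SimpleGraph.Colorable.of_isEmpty _)
        rw [h] at h0
        norm_cast at h0
      obtain ⟨v⟩ := hne
      exact ⟨{v}, by simp [SimpleGraph.isNClique_iff]⟩
    · by_contra hno
      have h1 : (zdGraph S).chromaticNumber ≤ (1 : ℕ) := by
        refine SimpleGraph.chromaticNumber_le_iff_colorable.2 (zd_colorable_one S ?_)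
        intro x y hxy
        refine hno ⟨{x, y}, ?_⟩
        rw [SimpleGraph.isNClique_iff]
        refine ⟨?_, Finset.card_pair hxy.ne⟩
        simp [SimpleGraph.isClique_iff, Set.pairwise_insert, hxy, hxy.symm]
      rw [h] at h1
      norm_cast at h1
  · rintro ⟨⟨T, hT⟩, hmax⟩
    apply le_antisymm
    · apply SimpleGraph.chromaticNumber_le_iff_colorable.2
      interval_cases n
      · apply zd_colorable_one
        intro x y hxy
        have := hmax {x, y} (by
          simp [SimpleGraph.isClique_iff, Set.pairwise_insert, hxy, hxy.symm])
        rw [Finset.card_pair hxy.ne] at this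
        omega
      · apply zd_two_colorable
        intro x y z hx hy hz hxy hxz hyz pxy pxz pyz
        let X : zdVerts S := ⟨x, hx, y, hy, pxy⟩
        let Y : zdVerts S := ⟨y, hy, z, hz, pyz⟩
        let Z : zdVerts S := ⟨z, hz, x, hx, by rw [CommSemigroupWithZero.mul_comm]; exact pxz⟩
        have aXY : (zdGraph S).Adj X Y := ⟨fun h => hxy (congrArg Subtype.val h), pxy⟩
        have aXZ : (zdGraph S).Adj X Z := ⟨fun h => hxz (congrArg Subtype.val h), pxz⟩
        have aYZ : (zdGraph S).Adj Y Z := ⟨fun h => hyz (congrArg Subtype.val h), pyz⟩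
        have h3 : (zdGraph S).IsNClique 3 {X, Y, Z} :=
          SimpleGraph.is3Clique_triple_iff.2 ⟨aXY, aXZ, aYZ⟩
        have := hmax _ h3.isClique
        rw [h3.card_eq] at this
        omega
    · have := hT.isClique.card_le_chromaticNumber
      rwa [hT.card_eq] at this
end
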